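/- arXiv:0802.3539 — 4 statements merged into one kernel-verified Lean document; each statement's English description precedes it below -/
import Mathlib

section
/- Fix μ ∈ (0,1). The function ε ↦ ℋ((1 + ε)μ, μ) is strictly monotonically decreasing with respect to ε on the interval (0, 1/μ − 1). Similarly, the function ε ↦ ℋ((1 − ε)μ, μ) is strictly monotonically decreasing with respect to ε on the interval (0, 1). -/
/-- The function ℋ(z, μ) = ln(μ/z) + (1/z − 1)·ln((1 − μ)/(1 − z)). -/
noncomputable def Hfun (z μ : ℝ) : ℝ :=
  Real.log (μ / z) + (1 / z - 1) * Real.log ((1 - μ) / (1 - z))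

theorem Hfun_deriv_aux (μ z : ℝ) (h0 : 0 < μ) (h1 : μ < 1) (hz0 : 0 < z) (hz1 : z < 1) :
    HasDerivAt (fun z => Hfun z μ) (-(1 / z ^ 2) * Real.log ((1 - μ) / (1 - z))) z := by
  have hz : z ≠ 0 := hz0.ne'
  have hw : 1 - z ≠ 0 := by linarith
  have hm : 1 - μ ≠ 0 := by linarith
  have a : HasDerivAt (fun z : ℝ => μ / z) _ z :=
    (hasDerivAt_const z μ).div (hasDerivAt_id z) hz
  have b : HasDerivAt (fun z : ℝ => (1 - μ) / (1 - z)) _ z :=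
    (hasDerivAt_const z (1 - μ)).div ((hasDerivAt_id z).const_sub 1) hw
  have c : HasDerivAt (fun z : ℝ => 1 / z - 1) _ z :=
    ((hasDerivAt_const z (1 : ℝ)).div (hasDerivAt_id z) hz).sub_const 1
  have d := (a.log (div_ne_zero h0.ne' hz)).add (c.mul (b.log (div_ne_zero hm hw)))
  refine HasDerivAt.congr_deriv d ?_
  simp only [id]
  generalize Real.log ((1 - μ) / (1 - z)) = L
  have := h0.ne'
  field_simp
  ring

theorem Hfun_anti_aux (μ : ℝ) (h0 : 0 < μ) (h1 : μ < 1) :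
    StrictAntiOn (fun z => Hfun z μ) (Set.Ioo μ 1) := by
  apply strictAntiOn_of_deriv_neg (convex_Ioo μ 1)
  · intro z hz
    exact (Hfun_deriv_aux μ z h0 h1 (h0.trans hz.1) hz.2).continuousAt.continuousWithinAt
  · intro z hz
    rw [interior_Ioo] at hz
    rw [(Hfun_deriv_aux μ z h0 h1 (h0.trans hz.1) hz.2).deriv]
    have hz0 : 0 < z := h0.trans hz.1
    have : 0 < Real.log ((1 - μ) / (1 - z)) := by
      apply Real.log_pos
      rw [one_lt_div (by linarith [hz.2])]
      linarith [hz.1]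
    have : 0 < (1 / z ^ 2) * Real.log ((1 - μ) / (1 - z)) := by positivity
    linarith

theorem Hfun_mono_aux (μ : ℝ) (h0 : 0 < μ) (h1 : μ < 1) :
    StrictMonoOn (fun z => Hfun z μ) (Set.Ioo 0 μ) := by
  apply strictMonoOn_of_deriv_pos (convex_Ioo 0 μ)
  · intro z hz
    exact (Hfun_deriv_aux μ z h0 h1 hz.1 (hz.2.trans h1)).continuousAt.continuousWithinAt
  · intro z hz
    rw [interior_Ioo] at hz
    rw [(Hfun_deriv_aux μ z h0 h1 hz.1 (hz.2.trans h1)).deriv]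
    have hz0 : 0 < z := hz.1
    have hw : 0 < 1 - z := by linarith [hz.2]
    have : Real.log ((1 - μ) / (1 - z)) < 0 := by
      apply Real.log_neg (div_pos (by linarith) hw)
      rw [div_lt_one hw]
      linarith [hz.2]
    have h2 : 0 < 1 / z ^ 2 := by positivity
    exact mul_pos_of_neg_of_neg (by linarith) this

theorem stmt_4 (μ : ℝ) (hμ : μ ∈ Set.Ioo (0 : ℝ) 1) :
    StrictAntiOn (fun ε : ℝ => Hfun ((1 + ε) * μ) μ) (Set.Ioo 0 (1 / μ - 1)) ∧
    StrictAntiOn (fun ε : ℝ => Hfun ((1 - ε) * μ) μ) (Set.Ioo 0 1) := by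
  obtain ⟨h0, h1⟩ := hμ
  constructor
  · have key : ∀ x ∈ Set.Ioo 0 (1 / μ - 1), (1 + x) * μ ∈ Set.Ioo μ 1 := by
      intro x hx
      have hx2 : 1 + x < 1 / μ := by linarith [hx.2]
      rw [lt_div_iff₀ h0] at hx2
      exact ⟨by nlinarith [mul_pos hx.1 h0], hx2⟩
    intro x hx y hy hxy
    exact Hfun_anti_aux μ h0 h1 (key x hx) (key y hy)
      (mul_lt_mul_of_pos_right (by linarith) h0)
  · have key : ∀ x ∈ Set.Ioo (0 : ℝ) 1, (1 - x) * μ ∈ Set.Ioo 0 μ := by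
      intro x hx
      exact ⟨mul_pos (by linarith [hx.2]) h0, by nlinarith [mul_pos hx.1 h0]⟩
    intro x hx y hy hxy
    exact Hfun_mono_aux μ h0 h1 (key y hy) (key x hx)
      (mul_lt_mul_of_pos_right (by linarith) h0)
end

section
/- Fix γ > 0 and μ ∈ (0,1). The function ε ↦ ℋ( γ/(γ/(μ(1 − ε)) − 1), μ ) is strictly monotonically decreasing with respect to ε on the interval ( μ/(γ + μ), 1 ). -/
theorem Hfun_mono (μ : ℝ) (h0 : 0 < μ) (h1 : μ < 1) :
    StrictMonoOn (fun z : ℝ => Hfun z μ) (Set.Ioo 0 μ) := by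
  have key : ∀ z ∈ Set.Ioo 0 μ, HasDerivAt (fun z : ℝ => Hfun z μ)
      (-(1 / z ^ 2) * Real.log ((1 - μ) / (1 - z))) z := by
    rintro z ⟨hz0, hz1⟩
    have hz : z ≠ 0 := hz0.ne'
    have hz2 : 1 - z ≠ 0 := by linarith
    have hm : 1 - μ ≠ 0 := by linarith
    have hmu := h0.ne'
    have e1 : HasDerivAt (fun z : ℝ => μ / z) (-μ / z ^ 2) z := by
      exact HasDerivAt.congr_deriv ((hasDerivAt_const z μ).div (hasDerivAt_id z) hz) (by simp)
    have e2 : HasDerivAt (fun z : ℝ => 1 / z - 1) (-1 / z ^ 2) z := by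
      exact HasDerivAt.congr_deriv (((hasDerivAt_const z (1:ℝ)).div (hasDerivAt_id z) hz).sub_const 1) (by simp)
    have e3 : HasDerivAt (fun z : ℝ => (1 - μ) / (1 - z)) ((1 - μ) / (1 - z) ^ 2) z := by
      exact HasDerivAt.congr_deriv ((hasDerivAt_const z (1 - μ)).div ((hasDerivAt_id z).const_sub 1) hz2) (by simp)
    have := (e1.log (div_ne_zero hmu hz)).add (e2.mul (e3.log (div_ne_zero hm hz2)))
    refine HasDerivAt.congr_deriv this ?_
    generalize Real.log ((1 - μ) / (1 - z)) = L
    field_simp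
    ring
  apply strictMonoOn_of_deriv_pos (convex_Ioo 0 μ)
  · intro z hz
    exact (key z hz).continuousAt.continuousWithinAt
  · intro z hz
    rw [interior_Ioo] at hz
    rw [(key z hz).deriv]
    obtain ⟨hz0, hz1⟩ := hz
    have : Real.log ((1 - μ) / (1 - z)) < 0 := by
      apply Real.log_neg
      · apply div_pos <;> linarith
      · rw [div_lt_one] <;> linarith
    have h2 : 0 < 1 / z ^ 2 := by positivity
    nlinarith

theorem stmt_7 (γ : ℝ) (hγ : 0 < γ) (μ : ℝ) (hμ : μ ∈ Set.Ioo (0 : ℝ) 1) :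
    StrictAntiOn (fun ε : ℝ => Hfun (γ / (γ / (μ * (1 - ε)) - 1)) μ)
      (Set.Ioo (μ / (γ + μ)) 1) := by
  obtain ⟨h0, h1⟩ := hμ
  have A : ∀ ε ∈ Set.Ioo (μ / (γ + μ)) 1, γ / μ < γ / (μ * (1 - ε)) - 1 := by
    rintro ε ⟨ha, hb⟩
    have h1e : 0 < 1 - ε := by linarith
    rw [div_lt_iff₀ (by positivity)] at ha
    rw [lt_sub_iff_add_lt, lt_div_iff₀ (by positivity)]
    have : (γ / μ + 1) * (μ * (1 - ε)) = (γ + μ) * (1 - ε) := by field_simp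
    rw [this]
    linarith
  have hgm : 0 < γ / μ := by positivity
  have B : ∀ ε ∈ Set.Ioo (μ / (γ + μ)) 1, γ / (γ / (μ * (1 - ε)) - 1) ∈ Set.Ioo 0 μ := by
    intro ε he
    have h := A ε he
    have hp := hgm.trans h
    refine ⟨div_pos hγ hp, ?_⟩
    rw [div_lt_iff₀ hp]
    rw [div_lt_iff₀ h0] at h
    linarith
  intro a ha b hb hab
  apply Hfun_mono μ h0 h1 (B b hb) (B a ha)
  apply div_lt_div_of_pos_left hγ (hgm.trans (A a ha))
  have hb1 : 0 < 1 - b := by linarith [hb.2]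
  have : γ / (μ * (1 - a)) < γ / (μ * (1 - b)) := by
    apply div_lt_div_of_pos_left hγ (by positivity)
    apply mul_lt_mul_of_pos_left _ h0
    linarith
  linarith
end

section
/- Fix γ > 0, μ ∈ (0,1), and δ ∈ (0,1). Then there exists ε* ∈ ( μ/(γ + μ), 1 ) such that ℋ( γ/(γ/(μ(1 − ε*)) − 1), μ ) = ln(δ/2)/γ. -/
theorem exists_z (μ : ℝ) (h0 : 0 < μ) (h1 : μ < 1) (c : ℝ) (hc : c < 0) :
    ∃ z ∈ Set.Ioo 0 μ, Hfun z μ = c := by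
  let G : ℝ → ℝ := fun z => z * Real.log μ - z * Real.log z + (1 - z) * Real.log (1 - μ)
    - (1 - z) * Real.log (1 - z) - c * z
  have hG : Continuous G := by
    have a := Real.continuous_mul_log
    have b : Continuous fun z : ℝ => (1 - z) * Real.log (1 - z) :=
      a.comp (continuous_const.sub continuous_id)
    exact ((((continuous_id.mul continuous_const).sub a).add
      ((continuous_const.sub continuous_id).mul continuous_const)).sub b).sub
      (continuous_const.mul continuous_id)
  have hl : G 0 < 0 := by
    have := Real.log_neg (x := 1 - μ) (by linarith) (by linarith)
    simpa [G] using this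
  have hr : 0 < G μ := by
    have : G μ = -c * μ := by simp only [G]; ring
    rw [this]
    exact mul_pos (by linarith) h0
  obtain ⟨z, ⟨z0, z1⟩, hz⟩ := intermediate_value_Ioo h0.le hG.continuousOn ⟨hl, hr⟩
  refine ⟨z, ⟨z0, z1⟩, ?_⟩
  unfold Hfun
  rw [Real.log_div h0.ne' z0.ne', Real.log_div (by linarith) (by linarith)]
  simp only [G] at hz
  field_simp
  linarith

theorem stmt_8 (γ : ℝ) (hγ : 0 < γ) (μ : ℝ) (hμ : μ ∈ Set.Ioo (0 : ℝ) 1)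
    (δ : ℝ) (hδ : δ ∈ Set.Ioo (0 : ℝ) 1) :
    ∃ ε : ℝ, ε ∈ Set.Ioo (μ / (γ + μ)) 1 ∧
      Hfun (γ / (γ / (μ * (1 - ε)) - 1)) μ = Real.log (δ / 2) / γ := by
  obtain ⟨h0, h1⟩ := hμ
  obtain ⟨d0, d1⟩ := hδ
  have hc : Real.log (δ / 2) / γ < 0 :=
    div_neg_of_neg_of_pos (Real.log_neg (by linarith) (by linarith)) hγ
  obtain ⟨z, ⟨z0, z1⟩, hz⟩ := exists_z μ h0 h1 _ hc
  have hm : 0 < μ * (z + γ) := by positivity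
  refine ⟨1 - γ * z / (μ * (z + γ)), ⟨?_, ?_⟩, ?_⟩
  · rw [lt_sub_iff_add_lt, div_add_div _ _ (by positivity) (by positivity),
      div_lt_one (by positivity)]
    have : 0 < γ * γ * (μ - z) := by
      have := sub_pos.2 z1
      positivity
    nlinarith
  · have : 0 < γ * z / (μ * (z + γ)) := by positivity
    linarith
  · have : γ / (γ / (μ * (1 - (1 - γ * z / (μ * (z + γ))))) - 1) = z := by
      have e : γ / (μ * (1 - (1 - γ * z / (μ * (z + γ))))) - 1 = γ / z := by
        have : z + γ ≠ 0 := by positivity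
        rw [sub_sub_cancel]
        field_simp
        ring
      rw [e]
      field_simp
    rw [this, hz]
end

section
/- Fix γ > 0, μ ∈ (0,1), and δ with 2μ^γ < δ < 1. Then there exists ε* ∈ (0, 1/μ − 1) such that ℋ( (1 + ε*)μ, μ ) = ln(δ/2)/γ. -/
theorem stmt_9 (γ : ℝ) (hγ : 0 < γ) (μ : ℝ) (hμ : μ ∈ Set.Ioo (0 : ℝ) 1)
    (δ : ℝ) (hδ : δ ∈ Set.Ioo (2 * μ ^ γ) 1) :
    ∃ ε : ℝ, ε ∈ Set.Ioo 0 (1 / μ - 1) ∧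
      Hfun ((1 + ε) * μ) μ = Real.log (δ / 2) / γ := by
  obtain ⟨h0, h1⟩ := hμ
  obtain ⟨h2, h3⟩ := hδ
  have hp : 0 < μ ^ γ := Real.rpow_pos_of_pos h0 γ
  let G : ℝ → ℝ := fun z => Real.log μ - Real.log z + (1 / z - 1) * Real.log (1 - μ)
    - 1 / z * ((1 - z) * Real.log (1 - z))
  have hc : ContinuousOn G (Set.Icc μ 1) := by
    have hz : ∀ z ∈ Set.Icc μ 1, z ≠ 0 := fun z hz => (h0.trans_le hz.1).ne'
    have a1 : ContinuousOn (fun z : ℝ => Real.log z) (Set.Icc μ 1) :=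
      ContinuousOn.log continuousOn_id hz
    have a2 : ContinuousOn (fun z : ℝ => 1 / z) (Set.Icc μ 1) :=
      continuousOn_const.div continuousOn_id hz
    have a3 : Continuous (fun z : ℝ => (1 - z) * Real.log (1 - z)) :=
      Real.continuous_mul_log.comp (continuous_const.sub continuous_id)
    exact ((continuousOn_const.sub a1).add ((a2.sub continuousOn_const).mul
      continuousOn_const)).sub (a2.mul a3.continuousOn)
  have hGμ : G μ = 0 := by
    simp only [G]; field_simp; ring
  have hG1 : G 1 = Real.log μ := by simp [G]
  have hm : Real.log (δ / 2) / γ ∈ Set.Ioo (G 1) (G μ) := by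
    rw [hGμ, hG1]
    constructor
    · rw [lt_div_iff₀ hγ, mul_comm, ← Real.log_rpow h0]
      exact Real.log_lt_log hp (by linarith)
    · exact div_neg_of_neg_of_pos (Real.log_neg (by linarith) (by linarith)) hγ
  obtain ⟨z, ⟨hz1, hz2⟩, hz⟩ := intermediate_value_Ioo' h1.le hc hm
  have hz0 : 0 < z := h0.trans hz1
  refine ⟨z / μ - 1, ⟨?_, ?_⟩, ?_⟩
  · rw [sub_pos, lt_div_iff₀ h0]; linarith
  · gcongr
  · have e : (1 + (z / μ - 1)) * μ = z := by field_simp; ring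
    rw [e, ← hz, Hfun, Real.log_div h0.ne' hz0.ne',
      Real.log_div (by linarith) (by linarith)]
    simp only [G]; field_simp; ring
end
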